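/- arXiv:1903.05073 — 2 statements merged into one kernel-verified Lean document; each statement's English description precedes it below -/
import Mathlib

section
/- Let k, ε ∈ ℝ, let I ⊆ ℝ be an interval containing 0, and let x, y, v : ℝ → ℝ satisfy, for all t ∈ I, x'(t) = v(t)·(k·y(t) − 1) and y'(t) = −v(t)·k·x(t). If |k·(x(0)² + y(0)² − ε²)/2 − y(0)| < ε, then for all t ∈ I, |k·(x(t)² + y(t)² − ε²)/2 − y(t)| < ε; i.e., the annulus condition is a differential invariant of the plant. -/
/-!
In robot-relative coordinates the waypoint moves along a circle around the centre of curvature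
`(0, 1 / k)` (along a horizontal line if `k = 0`), whatever the speed. The expression inside the
absolute value of the annulus condition is constant on each such path.
-/

theorem eq_of_hasDerivWithinAt_zero {𝕜 E : Type*} [RCLike 𝕜] [NormedAddCommGroup E]
    [NormedSpace 𝕜 E] {f : 𝕜 → E} {s : Set 𝕜} {a b : 𝕜} (hs : Convex ℝ s)
    (hf : ∀ z ∈ s, HasDerivWithinAt f 0 s z) (ha : a ∈ s) (hb : b ∈ s) : f a = f b := by
  have hnorm : ‖f a - f b‖ ≤ 0 * ‖a - b‖ :=
    hs.norm_image_sub_le_of_norm_hasDerivWithin_le hf (fun _ _ ↦ norm_zero.le) hb ha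
  rwa [zero_mul, norm_le_zero_iff, sub_eq_zero] at hnorm

/-- The signed quantity whose absolute value the annulus condition compares with `ε`, as a
function of the waypoint `(x, y)`. -/
noncomputable def annulusOffset (k ε x y : ℝ) : ℝ :=
  k * (x ^ 2 + y ^ 2 - ε ^ 2) / 2 - y

section Trajectory

variable {k ε : ℝ} {x y : ℝ → ℝ} {I : Set ℝ}

theorem hasDerivWithinAt_annulusOffset {x' y' t : ℝ}
    (hx : HasDerivWithinAt x x' I t) (hy : HasDerivWithinAt y y' I t) :
    HasDerivWithinAt (fun s ↦ annulusOffset k ε (x s) (y s))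
      (k * (x t * x' + y t * y') - y') I t := by
  have hsq : HasDerivWithinAt (fun s ↦ x s ^ 2 + y s ^ 2 - ε ^ 2)
      (2 * x t * x' + 2 * y t * y') I t := by
    simpa using ((hx.pow 2).add (hy.pow 2)).sub_const (ε ^ 2)
  exact (((hsq.const_mul k).div_const 2).sub hy).congr_deriv (by ring)

theorem hasDerivWithinAt_annulusOffset_zero {v t : ℝ}
    (hx : HasDerivWithinAt x (v * (k * y t - 1)) I t)
    (hy : HasDerivWithinAt y (-v * k * x t) I t) :
    HasDerivWithinAt (fun s ↦ annulusOffset k ε (x s) (y s)) 0 I t :=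
  (hasDerivWithinAt_annulusOffset hx hy).congr_deriv (by ring)

theorem annulusOffset_eq_of_dubins {v : ℝ → ℝ} {t₀ t : ℝ} (hI : I.OrdConnected)
    (hx : ∀ s ∈ I, HasDerivWithinAt x (v s * (k * y s - 1)) I s)
    (hy : ∀ s ∈ I, HasDerivWithinAt y (-(v s) * k * x s) I s) (ht : t ∈ I) (ht₀ : t₀ ∈ I) :
    annulusOffset k ε (x t) (y t) = annulusOffset k ε (x t₀) (y t₀) :=
  eq_of_hasDerivWithinAt_zero hI.convex
    (fun s hs ↦ hasDerivWithinAt_annulusOffset_zero (hx s hs) (hy s hs)) ht ht₀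

end Trajectory

theorem dubins_annulus_invariant_general {k ε : ℝ} {I : Set ℝ} {x y v : ℝ → ℝ} {t₀ : ℝ}
    (hI : I.OrdConnected) (ht₀ : t₀ ∈ I)
    (hx : ∀ t ∈ I, HasDerivWithinAt x (v t * (k * y t - 1)) I t)
    (hy : ∀ t ∈ I, HasDerivWithinAt y (-(v t) * k * x t) I t)
    (hinit : |k * (x t₀ ^ 2 + y t₀ ^ 2 - ε ^ 2) / 2 - y t₀| < ε) :
    ∀ t ∈ I, |k * (x t ^ 2 + y t ^ 2 - ε ^ 2) / 2 - y t| < ε := by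
  intro t ht
  change |annulusOffset k ε (x t) (y t)| < ε
  rw [annulusOffset_eq_of_dubins hI hx hy ht ht₀]
  exact hinit

/-- The annulus condition `|k·(x² + y² − ε²)/2 − y| < ε` is a differential
invariant of the planar Dubins plant ODE `x' = v·(k·y − 1)`, `y' = −v·k·x`. -/
theorem dubins_annulus_invariant
    (k ε : ℝ) (I : Set ℝ) (hI : I.OrdConnected) (h0 : (0 : ℝ) ∈ I)
    (x y v : ℝ → ℝ)
    (hx : ∀ t ∈ I, HasDerivAt x (v t * (k * y t - 1)) t)
    (hy : ∀ t ∈ I, HasDerivAt y (-(v t) * k * x t) t)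
    (hinit : |k * (x 0 ^ 2 + y 0 ^ 2 - ε ^ 2) / 2 - y 0| < ε) :
    ∀ t ∈ I, |k * (x t ^ 2 + y t ^ 2 - ε ^ 2) / 2 - y t| < ε :=
  dubins_annulus_invariant_general hI h0 (fun t ht ↦ (hx t ht).hasDerivWithinAt)
    (fun t ht ↦ (hy t ht).hasDerivWithinAt) hinit
end

section
/- Let k ≠ 0, ε > 0 with |k|·ε ≤ 1, and v̄ > 0. Let x, y : ℝ → ℝ satisfy, for all t ≥ 0, x'(t) = v̄·(k·y(t) − 1) and y'(t) = −v̄·k·x(t), and suppose |k·(x(0)² + y(0)² − ε²)/2 − y(0)| < ε. Then there exists t ∈ [0, 2π/(|k|·v̄)] with x(t)² + y(t)² < ε²; i.e., driving at constant speed v̄ along curvature k reaches the goal region of radius ε within one full rotation. -/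
/-!
Identify the plane with `ℂ` and write `z = x + i y`. The equations of motion become
`z' = -i k v̄ (z - i / k)`: the waypoint runs around the circle centered at `i / k` through its
initial position, completing a turn in time `2π / |k v̄|`. The annulus condition makes the radius of
this circle differ from `1 / |k|`, the distance of its center from the origin, by less than `ε`, so
that the point of the circle nearest to the origin lies within distance `ε` of it.
-/

section

open Complex Set

theorem sub_eq_exp_smul_sub_of_hasDerivWithinAt {E : Type*} [NormedAddCommGroup E]
    [NormedSpace ℂ E] {s : Set ℝ} (hs : Convex ℝ s) {a : ℂ} {c : E} {z : ℝ → E}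
    (hz : ∀ t ∈ s, HasDerivWithinAt z (a • (z t - c)) s t) {t₀ t : ℝ} (ht₀ : t₀ ∈ s)
    (ht : t ∈ s) : z t - c = exp (a * (t - t₀)) • (z t₀ - c) := by
  have h_deriv_zero : ∀ u ∈ s,
      HasDerivWithinAt (fun u : ℝ ↦ exp (-a * (u - t₀)) • (z u - c)) 0 s u := by
    intro u hu
    have h_exp : HasDerivAt (fun u : ℝ ↦ exp (-a * (u - t₀))) (exp (-a * (u - t₀)) * -a) u := by
      simpa using ((ofRealCLM.hasDerivAt.sub_const (t₀ : ℂ)).const_mul (-a)).cexp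
    refine (h_exp.hasDerivWithinAt.smul ((hz u hu).sub_const c)).congr_deriv ?_
    module
  have h_const : exp (-a * (t - t₀)) • (z t - c) = z t₀ - c := by
    simpa [sub_eq_zero] using hs.norm_image_sub_le_of_norm_hasDerivWithin_le (C := 0)
      h_deriv_zero (by simp) ht₀ ht
  rw [← h_const, smul_smul, ← exp_add, neg_mul, add_neg_cancel, exp_zero, one_smul]

theorem periodic_comp_mul_left_div_abs {α β : Type*} [Field α] [LinearOrder α]
    [IsStrictOrderedRing α] {f : α → β} {c : α} (hf : Function.Periodic f c) (ω : α) :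
    Function.Periodic (fun t ↦ f (ω * t)) (c / |ω|) := by
  have h_signed : Function.Periodic (fun t ↦ f (ω * t)) (c / ω) := by
    simpa only [div_eq_inv_mul] using hf.const_mul ω
  obtain h_abs | h_abs := abs_choice ω
  · rwa [h_abs]
  · rw [h_abs, div_neg]
    exact h_signed.neg

theorem exists_mem_Ico_exp_ofReal_mul_I_eq {ω : ℝ} (hω : ω ≠ 0) {u : ℂ} (hu : ‖u‖ = 1) :
    ∃ t ∈ Ico 0 (2 * Real.pi / |ω|), exp ((ω * t : ℝ) * I) = u := by
  obtain ⟨θ, hθ⟩ := (norm_eq_one_iff u).mp hu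
  have h_periodic : Function.Periodic (fun θ : ℝ ↦ exp (θ * I)) (2 * Real.pi) := fun θ ↦ by
    simpa using exp_mul_I_periodic θ
  obtain ⟨t, ht, h_eq⟩ :=
    (periodic_comp_mul_left_div_abs h_periodic ω).exists_mem_Ico₀ (by positivity) (θ / ω)
  refine ⟨t, ht, h_eq.symm.trans ?_⟩
  rw [mul_div_cancel₀ θ hω, hθ]

theorem exists_mem_Ico_eq_of_circular_motion {ω : ℝ} (hω : ω ≠ 0) {c p : ℂ} {z : ℝ → ℂ}
    (hz : ∀ t ∈ Ico 0 (2 * Real.pi / |ω|),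
      HasDerivWithinAt z (ω * I * (z t - c)) (Ico 0 (2 * Real.pi / |ω|)) t)
    (hp : ‖p - c‖ = ‖z 0 - c‖) :
    ∃ t ∈ Ico 0 (2 * Real.pi / |ω|), z t = p := by
  have h_zero : (0 : ℝ) ∈ Ico 0 (2 * Real.pi / |ω|) := ⟨le_rfl, by positivity⟩
  obtain h_at_center | h_ne := eq_or_ne (z 0 - c) 0
  · refine ⟨0, h_zero, ?_⟩
    rw [h_at_center, norm_zero, norm_eq_zero] at hp
    exact sub_left_injective (h_at_center.trans hp.symm)
  · have h_unit : ‖(p - c) / (z 0 - c)‖ = 1 := by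
      rw [norm_div, hp, div_self (norm_ne_zero_iff.mpr h_ne)]
    obtain ⟨t, ht, h_exp⟩ := exists_mem_Ico_exp_ofReal_mul_I_eq hω h_unit
    refine ⟨t, ht, sub_left_injective (b := c) ?_⟩
    calc z t - c = exp (ω * I * (t - (0 : ℝ))) • (z 0 - c) :=
          sub_eq_exp_smul_sub_of_hasDerivWithinAt (convex_Ico _ _) hz h_zero ht
      _ = exp ((ω * t : ℝ) * I) * (z 0 - c) := by
          rw [ofReal_zero, sub_zero, smul_eq_mul, mul_right_comm, ofReal_mul]
      _ = p - c := by rw [h_exp, div_mul_cancel₀ _ h_ne]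

theorem exists_norm_sub_eq_and_norm_eq_abs_sub {E : Type*} [NormedAddCommGroup E]
    [NormedSpace ℝ E] {c : E} (hc : c ≠ 0) {r : ℝ} (hr : 0 ≤ r) :
    ∃ p : E, ‖p - c‖ = r ∧ ‖p‖ = |‖c‖ - r| := by
  have hc' : ‖c‖ ≠ 0 := norm_ne_zero_iff.mpr hc
  refine ⟨(1 - r / ‖c‖) • c, ?_, ?_⟩
  · rw [sub_smul, one_smul, sub_sub_cancel_left, norm_neg, norm_smul, norm_div, norm_norm,
      Real.norm_of_nonneg hr, div_mul_cancel₀ _ hc']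
  · rw [norm_smul, Real.norm_eq_abs, ← abs_norm c, ← abs_mul, abs_norm, sub_mul, one_mul,
      div_mul_cancel₀ _ hc']

theorem abs_sub_lt_of_abs_sq_sub_sq_sub_sq_lt {d r ε : ℝ} (hd : 0 ≤ d) (hr : 0 ≤ r)
    (h : |r ^ 2 - d ^ 2 - ε ^ 2| < 2 * d * ε) : |d - r| < ε := by
  have hε : 0 < ε := pos_of_mul_pos_right ((abs_nonneg _).trans_lt h) (by positivity)
  obtain ⟨h_lower, h_upper⟩ := abs_lt.mp h
  have h_inner : d - ε < r := lt_of_pow_lt_pow_left₀ 2 hr (by linarith)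
  have h_outer : r < d + ε := lt_of_pow_lt_pow_left₀ 2 (by positivity) (by linarith)
  exact abs_lt.mpr ⟨by linarith, by linarith⟩

theorem abs_norm_sub_norm_sub_lt_of_annulus {k ε x y : ℝ} (hk : k ≠ 0)
    (h : |k * (x ^ 2 + y ^ 2 - ε ^ 2) / 2 - y| < ε) :
    |‖I / k‖ - ‖x + y * I - I / k‖| < ε := by
  have h_center_norm : ‖I / (k : ℂ)‖ = 1 / |k| := by
    rw [norm_div, norm_I, norm_real, Real.norm_eq_abs]
  have h_radius : ‖x + y * I - I / (k : ℂ)‖ ^ 2 = x ^ 2 + (y - 1 / k) ^ 2 := by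
    rw [← normSq_add_mul_I, normSq_eq_norm_sq]
    push_cast
    ring_nf
  have h_sq_sub_sq : x ^ 2 + (y - 1 / k) ^ 2 - (1 / |k|) ^ 2 - ε ^ 2 =
      2 * (1 / k) * (k * (x ^ 2 + y ^ 2 - ε ^ 2) / 2 - y) := by
    rw [div_pow, sq_abs]
    field_simp
    ring
  refine abs_sub_lt_of_abs_sq_sub_sq_sub_sq_lt (norm_nonneg _) (norm_nonneg _) ?_
  rw [h_radius, h_center_norm, h_sq_sub_sq, abs_mul, abs_mul, abs_two, abs_div, abs_one]
  gcongr

theorem hasDerivWithinAt_ofReal_add_ofReal_mul_I_of_dubins {k v t : ℝ} (hk : k ≠ 0)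
    {x y : ℝ → ℝ} {s : Set ℝ} (hx : HasDerivWithinAt x (v * (k * y t - 1)) s t)
    (hy : HasDerivWithinAt y (-v * k * x t) s t) :
    HasDerivWithinAt (fun t ↦ (x t + y t * I : ℂ))
      ((-(k * v) : ℝ) * I * (x t + y t * I - I / k)) s t := by
  have hk' : (k : ℂ) ≠ 0 := ofReal_ne_zero.mpr hk
  refine (hx.ofReal_comp.add (hy.ofReal_comp.mul_const I)).congr_deriv ?_
  push_cast
  field_simp
  linear_combination (k * v * y t - v : ℂ) * I_sq

theorem dubins_constant_speed_reaches_goal_general {k ε v : ℝ} (hk : k ≠ 0) (hv : v ≠ 0)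
    {x y : ℝ → ℝ}
    (hx : ∀ t ∈ Ico 0 (2 * Real.pi / |k * v|),
      HasDerivWithinAt x (v * (k * y t - 1)) (Ico 0 (2 * Real.pi / |k * v|)) t)
    (hy : ∀ t ∈ Ico 0 (2 * Real.pi / |k * v|),
      HasDerivWithinAt y (-v * k * x t) (Ico 0 (2 * Real.pi / |k * v|)) t)
    (hann : |k * (x 0 ^ 2 + y 0 ^ 2 - ε ^ 2) / 2 - y 0| < ε) :
    ∃ t ∈ Ico 0 (2 * Real.pi / |k * v|), x t ^ 2 + y t ^ 2 < ε ^ 2 := by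
  have h_center_ne : I / (k : ℂ) ≠ 0 := div_ne_zero I_ne_zero (ofReal_ne_zero.mpr hk)
  obtain ⟨p, hp_circle, hp_norm⟩ := exists_norm_sub_eq_and_norm_eq_abs_sub h_center_ne
    (norm_nonneg ((x 0 : ℂ) + y 0 * I - I / k))
  have hp_lt : ‖p‖ < ε := hp_norm.trans_lt (abs_norm_sub_norm_sub_lt_of_annulus hk hann)
  have hω : -(k * v) ≠ 0 := neg_ne_zero.mpr (mul_ne_zero hk hv)
  rw [← abs_neg (k * v)] at hx hy ⊢
  obtain ⟨t, ht, hzt⟩ := exists_mem_Ico_eq_of_circular_motion hω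
    (fun t ht ↦ hasDerivWithinAt_ofReal_add_ofReal_mul_I_of_dubins hk (hx t ht) (hy t ht))
    hp_circle
  refine ⟨t, ht, ?_⟩
  calc x t ^ 2 + y t ^ 2 = ‖p‖ ^ 2 := by
        rw [← hzt, ← normSq_eq_norm_sq, normSq_add_mul_I]
    _ < ε ^ 2 := by gcongr

end

/-- Liveness at constant speed: if the annulus condition holds initially, then
driving at constant speed `v̄ > 0` along curvature `k ≠ 0` reaches the goal
region of radius `ε` within one full rotation, i.e. by time `2π/(|k|·v̄)`. -/
theorem dubins_constant_speed_reaches_goal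
    (k ε vbar : ℝ) (hk : k ≠ 0) (hε : 0 < ε) (hkε : |k| * ε ≤ 1)
    (hvbar : 0 < vbar)
    (x y : ℝ → ℝ)
    (hx : ∀ t : ℝ, 0 ≤ t → HasDerivAt x (vbar * (k * y t - 1)) t)
    (hy : ∀ t : ℝ, 0 ≤ t → HasDerivAt y (-vbar * k * x t) t)
    (hann : |k * (x 0 ^ 2 + y 0 ^ 2 - ε ^ 2) / 2 - y 0| < ε) :
    ∃ t ∈ Set.Icc (0 : ℝ) (2 * Real.pi / (|k| * vbar)),
      x t ^ 2 + y t ^ 2 < ε ^ 2 := by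
  obtain ⟨t, ht, h_goal⟩ := dubins_constant_speed_reaches_goal_general hk hvbar.ne'
    (fun t ht ↦ (hx t ht.1).hasDerivWithinAt) (fun t ht ↦ (hy t ht.1).hasDerivWithinAt) hann
  rw [abs_mul, abs_of_pos hvbar] at ht
  exact ⟨t, Set.Ico_subset_Icc_self ht, h_goal⟩
end
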